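/- Let f be a weight 2 meromorphic modular form for SL₂(ℤ). Then the quantity Φ_Λ = (1/ω₁²) f(ω₂/ω₁) is independent of the choice of basis (ω₁,ω₂) of the lattice Λ with Im(ω₂/ω₁) > 0, and the map 𝒵(Λ, z) = (1/ω₁²) f(ω₂/ω₁)·z + ζ(Λ,z) is an elliptic zeta function of weight −1 whose associated quotient Φ_{Λ_τ}/Ψ_{Λ_τ} equals f(τ). Consequently the map 𝒵 ↦ Φ_{Λ_τ}/Ψ_{Λ_τ} from elliptic zeta functions to weight 2 meromorphic modular forms is surjective. -/

import Mathlib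

open Complex

noncomputable section

/-- The lattice `ω₁ℤ + ω₂ℤ` as a subset of `ℂ`. -/
def latticeSet (ω₁ ω₂ : ℂ) : Set ℂ := {z : ℂ | ∃ m n : ℤ, z = (m : ℂ) * ω₁ + (n : ℂ) * ω₂}

/-- A subset of `ℂ` is a lattice if it is generated by a basis `(ω₁, ω₂)` with
`Im (ω₂/ω₁) > 0`. -/
def IsLattice (Λ : Set ℂ) : Prop := ∃ ω₁ ω₂ : ℂ, 0 < (ω₂ / ω₁).im ∧ Λ = latticeSet ω₁ ω₂

/-- The Weierstrass zeta function
`ζ(Λ, z) = 1/z + Σ_{ω ∈ Λ, ω ≠ 0} (1/(z-ω) + 1/ω + z/ω²)`. -/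
def wzeta (Λ : Set ℂ) (z : ℂ) : ℂ :=
  z⁻¹ + ∑' w : {w : ℂ // w ∈ Λ ∧ w ≠ 0}, ((z - w.1)⁻¹ + (w.1)⁻¹ + z / w.1 ^ 2)

/-- `η` is a quasi-period map for the Weierstrass zeta function of `Λ`:
`ζ(Λ, z+ω) = ζ(Λ, z) + η(ω)` for all `z ∈ ℂ` and `ω ∈ Λ`. -/
def IsQuasiPeriod (Λ : Set ℂ) (η : ℂ → ℂ) : Prop :=
  ∀ ω ∈ Λ, ∀ z : ℂ, wzeta Λ (z + ω) = wzeta Λ z + η ω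

/-- An elliptic zeta function of weight `k`, together with its quasi-period maps `H`:
(1) quasi-periodicity, (2) homogeneity of weight `k`, (3) the quasi-periods
`H_{Λ_τ}(τ)` and `H_{Λ_τ}(1)` are meromorphic in `τ` on the upper half-plane. -/
structure EllipticZeta (k : ℤ) where
  Z : Set ℂ → ℂ → ℂ
  H : Set ℂ → ℂ → ℂ
  quasi : ∀ Λ : Set ℂ, IsLattice Λ → ∀ ω ∈ Λ, ∀ z : ℂ, Z Λ (z + ω) = Z Λ z + H Λ ω
  homog : ∀ Λ : Set ℂ, IsLattice Λ → ∀ α : ℂ, α ≠ 0 → ∀ z : ℂ,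
    Z ((fun w => α * w) '' Λ) (α * z) = α ^ k * Z Λ z
  merom_tau : MeromorphicOn (fun τ : ℂ => H (latticeSet 1 τ) τ) {τ : ℂ | 0 < τ.im}
  merom_one : MeromorphicOn (fun τ : ℂ => H (latticeSet 1 τ) 1) {τ : ℂ | 0 < τ.im}

/-!
Two oriented bases of a lattice differ by an element of `SL₂(ℤ)`, so weight `k` modularity of `f` is
exactly what makes `ω₁⁻ᵏ f(ω₂/ω₁)` a function of the lattice.

Written as a sum over all of `Λ_τ`, the series for `ζ(Λ_τ, 1)` can be summed by rows. In the row of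
`mτ + n` the terms `1/(mτ + n) - 1/(mτ + n + 1)` telescope to zero, which leaves the Eisenstein
series `G₂(τ)`. Homogeneity of `ζ` turns `ζ(Λ_τ, τ)` into `τ⁻¹ G₂(-1/τ)`, so the transformation law
of `G₂` under `τ ↦ -1/τ` is Legendre's relation `τ η(1) - η(τ) = 2πi`. Adding `c z` to `ζ` adds `cω`
to the quasi-periods, and Legendre's relation then gives `Φ = -c` and `Ψ = -1`.
-/

section Lattice

open scoped ComplexConjugate

theorem left_mem_latticeSet (ω₁ ω₂ : ℂ) : ω₁ ∈ latticeSet ω₁ ω₂ := ⟨1, 0, by simp⟩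

theorem right_mem_latticeSet (ω₁ ω₂ : ℂ) : ω₂ ∈ latticeSet ω₁ ω₂ := ⟨0, 1, by simp⟩

theorem image_mul_latticeSet (α ω₁ ω₂ : ℂ) :
    (fun w ↦ α * w) '' latticeSet ω₁ ω₂ = latticeSet (α * ω₁) (α * ω₂) := by
  ext z
  constructor
  · rintro ⟨_, ⟨m, n, rfl⟩, rfl⟩
    exact ⟨m, n, by ring⟩
  · rintro ⟨m, n, rfl⟩
    exact ⟨_, ⟨m, n, rfl⟩, by ring⟩

theorem latticeSet_neg_right_swap (ω₁ ω₂ : ℂ) : latticeSet ω₂ (-ω₁) = latticeSet ω₁ ω₂ := by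
  ext z
  constructor
  · rintro ⟨m, n, rfl⟩
    exact ⟨-n, m, by push_cast; ring⟩
  · rintro ⟨m, n, rfl⟩
    exact ⟨n, -m, by push_cast; ring⟩

theorem ne_zero_of_im_div_pos {ω₁ ω₂ : ℂ} (h : 0 < (ω₂ / ω₁).im) : ω₁ ≠ 0 := by
  rintro rfl
  simp at h

theorem im_conj_mul_pos {ω₁ ω₂ : ℂ} (h : 0 < (ω₂ / ω₁).im) : 0 < (conj ω₁ * ω₂).im := by
  have hω₁ : ω₁ ≠ 0 := ne_zero_of_im_div_pos h
  have hmul : conj ω₁ * ω₂ = (normSq ω₁ : ℂ) * (ω₂ / ω₁) := by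
    rw [normSq_eq_conj_mul_self]
    field_simp
  rw [hmul, im_ofReal_mul]
  exact mul_pos (normSq_pos.2 hω₁) h

theorem im_conj_mul_intCombination (a b c d : ℤ) (ω₁ ω₂ : ℂ) :
    (conj (d * ω₁ + c * ω₂) * (b * ω₁ + a * ω₂)).im =
      ((a * d - b * c : ℤ) : ℝ) * (conj ω₁ * ω₂).im := by
  simp only [map_add, map_mul, map_intCast, mul_im, mul_re, add_im, add_re, intCast_im, intCast_re,
    conj_im, conj_re]
  push_cast
  ring

theorem exists_det_eq_one_of_latticeSet_eq {ω₁ ω₂ ω₁' ω₂' : ℂ}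
    (h : 0 < (ω₂ / ω₁).im) (h' : 0 < (ω₂' / ω₁').im)
    (hΛ : latticeSet ω₁ ω₂ = latticeSet ω₁' ω₂') :
    ∃ a b c d : ℤ, a * d - b * c = 1 ∧ ω₁' = d * ω₁ + c * ω₂ ∧ ω₂' = b * ω₁ + a * ω₂ := by
  obtain ⟨d, c, hω₁'⟩ : ω₁' ∈ latticeSet ω₁ ω₂ := hΛ ▸ left_mem_latticeSet ..
  obtain ⟨b, a, hω₂'⟩ : ω₂' ∈ latticeSet ω₁ ω₂ := hΛ ▸ right_mem_latticeSet ..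
  obtain ⟨d', c', hω₁⟩ : ω₁ ∈ latticeSet ω₁' ω₂' := hΛ ▸ left_mem_latticeSet ..
  obtain ⟨b', a', hω₂⟩ : ω₂ ∈ latticeSet ω₁' ω₂' := hΛ ▸ right_mem_latticeSet ..
  have hA := im_conj_mul_pos h
  have hA' := im_conj_mul_pos h'
  have hdet := im_conj_mul_intCombination a b c d ω₁ ω₂
  have hdet' := im_conj_mul_intCombination a' b' c' d' ω₁' ω₂'
  rw [← hω₁', ← hω₂'] at hdet
  rw [← hω₁, ← hω₂] at hdet'
  have hpos : 0 < a * d - b * c := by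
    rw [hdet] at hA'
    exact_mod_cast pos_of_mul_pos_left hA' hA.le
  have hunit : (a * d - b * c) * (a' * d' - b' * c') = 1 := by
    have : ((a * d - b * c : ℤ) : ℝ) * ((a' * d' - b' * c' : ℤ) : ℝ) = 1 :=
      mul_right_cancel₀ hA'.ne' (by rw [mul_assoc, ← hdet', ← hdet, one_mul])
    exact_mod_cast this
  exact ⟨a, b, c, d, Int.eq_one_of_mul_eq_one_right hpos.le hunit, hω₁', hω₂'⟩

end Lattice

section LatticeFunction

/-- Invariance of weight `k` under `SL₂(ℤ)`, with no regularity imposed: the functional equation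
of a modular form of weight `k`. -/
def IsModularOfWeight (k : ℕ) (f : ℂ → ℂ) : Prop :=
  ∀ a b c d : ℤ, a * d - b * c = 1 → ∀ τ : ℂ, 0 < τ.im →
    f (((a : ℂ) * τ + b) / ((c : ℂ) * τ + d)) = ((c : ℂ) * τ + d) ^ k * f τ

/-- The function of lattices `ω₁ℤ + ω₂ℤ ↦ ω₁⁻ᵏ f(ω₂/ω₁)` attached to `f`; for `k = 2` it is the
coefficient `Φ_Λ` of `z`. It is encoded by extending from oriented bases to sets along
`latticeSet`, so it carries information only when the value is independent of the basis, and it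
is `0` on sets that are not lattices. -/
def latticeFun (k : ℕ) (f : ℂ → ℂ) : Set ℂ → ℂ :=
  Function.extend (fun ω : {ω : ℂ × ℂ // 0 < (ω.2 / ω.1).im} ↦ latticeSet ω.1.1 ω.1.2)
    (fun ω ↦ 1 / ω.1.1 ^ k * f (ω.1.2 / ω.1.1)) 0

variable {k : ℕ} {f : ℂ → ℂ}

theorem div_pow_mul_eq_of_latticeSet_eq (hf : IsModularOfWeight k f) {ω₁ ω₂ ω₁' ω₂' : ℂ}
    (h : 0 < (ω₂ / ω₁).im) (h' : 0 < (ω₂' / ω₁').im)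
    (hΛ : latticeSet ω₁ ω₂ = latticeSet ω₁' ω₂') :
    1 / ω₁ ^ k * f (ω₂ / ω₁) = 1 / ω₁' ^ k * f (ω₂' / ω₁') := by
  obtain ⟨a, b, c, d, hdet, hω₁', hω₂'⟩ := exists_det_eq_one_of_latticeSet_eq h h' hΛ
  have hne : ω₁ ≠ 0 := ne_zero_of_im_div_pos h
  have hne' : ω₁' ≠ 0 := ne_zero_of_im_div_pos h'
  have hnum : (a : ℂ) * (ω₂ / ω₁) + b = ω₂' / ω₁ := by
    rw [hω₂']
    field_simp
    ring
  have hdenom : (c : ℂ) * (ω₂ / ω₁) + d = ω₁' / ω₁ := by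
    rw [hω₁']
    field_simp
    ring
  have htransf := hf a b c d hdet (ω₂ / ω₁) h
  rw [hnum, hdenom, div_div_div_cancel_right₀ hne] at htransf
  rw [htransf, div_pow]
  field_simp

theorem latticeFun_latticeSet (hf : IsModularOfWeight k f) {ω₁ ω₂ : ℂ} (h : 0 < (ω₂ / ω₁).im) :
    latticeFun k f (latticeSet ω₁ ω₂) = 1 / ω₁ ^ k * f (ω₂ / ω₁) :=
  Function.FactorsThrough.extend_apply
    (f := fun ω : {ω : ℂ × ℂ // 0 < (ω.2 / ω.1).im} ↦ latticeSet ω.1.1 ω.1.2)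
    (fun ω ω' hΛ ↦ div_pow_mul_eq_of_latticeSet_eq hf ω.2 ω'.2 hΛ) 0 ⟨(ω₁, ω₂), h⟩

theorem latticeFun_one_left (hf : IsModularOfWeight k f) {τ : ℂ} (hτ : 0 < τ.im) :
    latticeFun k f (latticeSet 1 τ) = f τ := by
  rw [latticeFun_latticeSet hf (by rwa [div_one])]
  simp

theorem latticeFun_image_mul (hf : IsModularOfWeight k f) {Λ : Set ℂ} (hΛ : IsLattice Λ)
    {α : ℂ} (hα : α ≠ 0) :
    latticeFun k f ((fun w ↦ α * w) '' Λ) = (α ^ k)⁻¹ * latticeFun k f Λ := by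
  obtain ⟨ω₁, ω₂, h, rfl⟩ := hΛ
  have hquot : α * ω₂ / (α * ω₁) = ω₂ / ω₁ := mul_div_mul_left _ _ hα
  rw [image_mul_latticeSet, latticeFun_latticeSet hf (by rwa [hquot]),
    latticeFun_latticeSet hf h, hquot, mul_pow]
  field_simp

theorem meromorphicOn_latticeFun (hf : IsModularOfWeight k f)
    (hf_mer : MeromorphicOn f {τ : ℂ | 0 < τ.im}) :
    MeromorphicOn (fun τ ↦ latticeFun k f (latticeSet 1 τ)) {τ : ℂ | 0 < τ.im} :=
  hf_mer.congr (fun _ hτ ↦ (latticeFun_one_left hf hτ).symm)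
    UpperHalfPlane.isOpen_upperHalfPlaneSet

end LatticeFunction

section QuasiPeriods

theorem wzeta_zero_right (Λ : Set ℂ) : wzeta Λ 0 = 0 := by
  simp [wzeta]

theorem wzeta_image_mul (Λ : Set ℂ) {α : ℂ} (hα : α ≠ 0) (z : ℂ) :
    wzeta ((fun w ↦ α * w) '' Λ) (α * z) = α⁻¹ * wzeta Λ z := by
  let e : {w : ℂ // w ∈ Λ ∧ w ≠ 0} ≃ {w : ℂ // w ∈ (fun w ↦ α * w) '' Λ ∧ w ≠ 0} :=
    (Equiv.mulLeft₀ α hα).subtypeEquiv fun w ↦ by simp [hα]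
  unfold wzeta
  rw [← e.tsum_eq, mul_add, ← tsum_mul_left, mul_inv]
  congr 1
  refine tsum_congr fun w ↦ ?_
  have hw : w.1 ≠ 0 := w.2.2
  have he : (e w : ℂ) = α * w := rfl
  rw [he, ← mul_sub, mul_inv, mul_inv]
  field_simp

theorem IsQuasiPeriod.eq_wzeta {Λ : Set ℂ} {η : ℂ → ℂ} (hη : IsQuasiPeriod Λ η) {ω : ℂ}
    (hω : ω ∈ Λ) : η ω = wzeta Λ ω := by
  simpa [wzeta_zero_right] using (hη ω hω 0).symm

theorem IsQuasiPeriod.image_mul {Λ : Set ℂ} {η : ℂ → ℂ} (hη : IsQuasiPeriod Λ η) {α : ℂ}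
    (hα : α ≠ 0) : IsQuasiPeriod ((fun w ↦ α * w) '' Λ) fun ω ↦ α⁻¹ * η (α⁻¹ * ω) := by
  rintro _ ⟨ω, hω, rfl⟩ z
  obtain ⟨y, rfl⟩ : ∃ y, z = α * y := ⟨α⁻¹ * z, (mul_inv_cancel_left₀ hα z).symm⟩
  beta_reduce
  rw [← mul_add, wzeta_image_mul Λ hα, wzeta_image_mul Λ hα, hη ω hω, inv_mul_cancel_left₀ hα,
    mul_add]

theorem wzeta_add_of_mem {η : ℂ → ℂ → ℂ}
    (hη : ∀ τ : ℂ, 0 < τ.im → IsQuasiPeriod (latticeSet 1 τ) (η τ))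
    {Λ : Set ℂ} (hΛ : IsLattice Λ) {ω : ℂ} (hω : ω ∈ Λ) (z : ℂ) :
    wzeta Λ (z + ω) = wzeta Λ z + wzeta Λ ω := by
  obtain ⟨ω₁, ω₂, h, rfl⟩ := hΛ
  have hω₁ : ω₁ ≠ 0 := ne_zero_of_im_div_pos h
  have hquasi := (hη _ h).image_mul hω₁
  rw [image_mul_latticeSet, mul_one, mul_div_cancel₀ _ hω₁] at hquasi
  rw [← hquasi.eq_wzeta hω]
  exact hquasi ω hω z

end QuasiPeriods

section Legendre

open UpperHalfPlane hiding I
open EisensteinSeries ModularGroup Filter Asymptotics SummationFilter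
open scoped Real Topology

/-- The term at `w` of the series defining `wzeta Λ z`. Since `0⁻¹ = 0`, its value at `w = 0` is
`z⁻¹`, the polar term of `wzeta Λ z`. -/
def wzetaSummand (z w : ℂ) : ℂ := (z - w)⁻¹ + w⁻¹ + z / w ^ 2

theorem wzetaSummand_eq_of_ne {z w : ℂ} (hw : w ≠ 0) (hzw : z - w ≠ 0) :
    wzetaSummand z w = z ^ 2 * (w⁻¹ * w⁻¹ * (z - w)⁻¹) := by
  rw [wzetaSummand]
  field_simp
  ring

theorem wzeta_eq_tsum_wzetaSummand {Λ : Set ℂ} (h0 : 0 ∈ Λ) {z : ℂ}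
    (hs : Summable fun w : Λ ↦ wzetaSummand z w) :
    wzeta Λ z = ∑' w : Λ, wzetaSummand z w := by
  have hnonzero : ∑' w : {w // w ∈ Λ ∧ w ≠ 0}, wzetaSummand z w =
      ∑' w, ({w | w ∈ Λ ∧ w ≠ 0} : Set ℂ).indicator (wzetaSummand z) w :=
    tsum_subtype ..
  have hwzeta : wzeta Λ z = z⁻¹ + ∑' w : {w // w ∈ Λ ∧ w ≠ 0}, wzetaSummand z w := rfl
  have hindicator : Summable (Λ.indicator (wzetaSummand z)) := summable_subtype_iff_indicator.1 hs
  rw [hwzeta, hnonzero, tsum_subtype Λ (wzetaSummand z), hindicator.tsum_eq_add_tsum_ite 0]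
  congr 1
  · simp [h0, wzetaSummand]
  · refine tsum_congr fun w ↦ ?_
    by_cases hw : w = 0 <;> by_cases hwΛ : w ∈ Λ <;> simp [hw, hwΛ]

/-- The point `-(mτ + n)` of the lattice `ℤ + τℤ`, for `v = (m, n)`; the sign makes `z - w` the
linear form `mτ + n + z` occurring in Eisenstein series. -/
def latticePoint (τ : ℍ) (v : Fin 2 → ℤ) : ℂ := -(v 0 * τ + v 1)

theorem latticePoint_eq_zero_iff (τ : ℍ) {v : Fin 2 → ℤ} : latticePoint τ v = 0 ↔ v = 0 := by
  refine ⟨fun h ↦ ?_, fun h ↦ by simp [h, latticePoint]⟩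
  have him : v 0 = 0 := by
    simpa [latticePoint, τ.im_ne_zero] using congrArg Complex.im h
  have hre : v 1 = 0 := by
    simpa [latticePoint, him] using h
  ext i
  fin_cases i <;> assumption

theorem latticePoint_injective (τ : ℍ) : Function.Injective (latticePoint τ) := fun v w h ↦ by
  rw [← sub_eq_zero, ← latticePoint_eq_zero_iff τ, ← sub_eq_zero.2 h]
  simp only [latticePoint, Pi.sub_apply]
  push_cast
  ring

theorem range_latticePoint (τ : ℍ) : Set.range (latticePoint τ) = latticeSet 1 τ := by
  ext z
  constructor
  · rintro ⟨v, rfl⟩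
    exact ⟨-v 1, -v 0, by push_cast [latticePoint]; ring⟩
  · rintro ⟨m, n, rfl⟩
    refine ⟨![-n, -m], ?_⟩
    simp only [latticePoint, Matrix.cons_val_zero, Matrix.cons_val_one]
    push_cast
    ring

theorem isBigO_latticePoint_inv (τ : ℍ) :
    (fun v ↦ (latticePoint τ v)⁻¹) =O[cofinite] fun v ↦ ‖v‖⁻¹ := by
  simpa only [latticePoint, inv_neg, Int.cast_zero, add_zero] using
    (isBigO_linear_add_const_vec τ 0 0).neg_left

theorem tendsto_norm_latticePoint (τ : ℍ) :
    Tendsto (fun v ↦ ‖latticePoint τ v‖) cofinite atTop := by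
  have hnorm : Tendsto (fun v : Fin 2 → ℤ ↦ ‖v‖) cofinite atTop :=
    tendsto_norm_comp_cofinite_atTop_of_isClosedEmbedding .id
  have hinv : Tendsto (fun v ↦ (latticePoint τ v)⁻¹) cofinite (𝓝 0) :=
    (isBigO_latticePoint_inv τ).trans_tendsto (tendsto_inv_atTop_zero.comp hnorm)
  have hne : ∀ᶠ v in cofinite, (latticePoint τ v)⁻¹ ≠ 0 := by
    filter_upwards [eventually_cofinite_ne 0] with v hv using
      inv_ne_zero ((latticePoint_eq_zero_iff τ).not.2 hv)
  simpa only [Function.comp_def, inv_inv] using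
    tendsto_norm_inv_nhdsNE_zero_atTop.comp (tendsto_nhdsWithin_iff.2 ⟨hinv, hne⟩)

theorem isBigO_sub_latticePoint_inv (τ : ℍ) (z : ℂ) :
    (fun v ↦ (z - latticePoint τ v)⁻¹) =O[cofinite] fun v ↦ ‖v‖⁻¹ := by
  have hconst : (fun _ ↦ z) =o[cofinite] latticePoint τ :=
    isLittleO_const_left.2 (.inr (tendsto_norm_latticePoint τ))
  have hsub : (fun v ↦ -latticePoint τ v) =Θ[cofinite] fun v ↦ z - latticePoint τ v := by
    simpa only [sub_eq_add_neg] using! hconst.neg_right.right_isTheta_add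
  have hneg := (isBigO_latticePoint_inv τ).neg_left
  simp only [← inv_neg] at hneg
  exact hsub.symm.inv.isBigO.trans hneg

theorem summable_wzetaSummand_latticePoint (τ : ℍ) (z : ℂ) :
    Summable fun v ↦ wzetaSummand z (latticePoint τ v) := by
  have hinj := latticePoint_injective τ
  have hO := (((isBigO_latticePoint_inv τ).mul (isBigO_latticePoint_inv τ)).mul
    (isBigO_sub_latticePoint_inv τ z)).const_mul_left (z ^ 2)
  have hterm : (fun v ↦ z ^ 2 * ((latticePoint τ v)⁻¹ * (latticePoint τ v)⁻¹ *
      (z - latticePoint τ v)⁻¹)) =ᶠ[cofinite] fun v ↦ wzetaSummand z (latticePoint τ v) := by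
    filter_upwards [hinj.tendsto_cofinite.eventually (eventually_cofinite_ne 0),
      hinj.tendsto_cofinite.eventually (eventually_cofinite_ne z)] with v hv hvz using
      (wzetaSummand_eq_of_ne hv (sub_ne_zero.2 hvz.symm)).symm
  refine summable_of_isBigO_rpow_norm (a := 3) (by norm_num) (hterm.symm.trans_isBigO ?_)
  refine hO.congr_right fun v ↦ ?_
  norm_cast
  rw [pow_three', mul_inv, mul_inv]

theorem wzeta_eq_tsum_latticePoint (τ : ℍ) (z : ℂ) :
    wzeta (latticeSet 1 τ) z = ∑' v, wzetaSummand z (latticePoint τ v) := by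
  have hinj := latticePoint_injective τ
  rw [← range_latticePoint, wzeta_eq_tsum_wzetaSummand, tsum_range _ hinj]
  · exact ⟨0, (latticePoint_eq_zero_iff τ).2 rfl⟩
  · rw [← (Equiv.ofInjective _ hinj).summable_iff]
    exact summable_wzetaSummand_latticePoint τ z

theorem tsum_wzetaSummand_one_row (τ : ℍ) (m : ℤ) :
    ∑' n : ℤ, wzetaSummand 1 (latticePoint τ ![m, n]) = e2Summand m τ := by
  have hsummable := summable_right_one_div_linear_sub_one_div_linear_succ τ m
  have htelescope :
      ∑' n : ℤ, (1 / ((m : ℂ) * τ + n) - 1 / ((m : ℂ) * τ + n + 1)) = 0 :=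
    (tsum_eq_of_summable_unconditional (L := symmetricIco ℤ) hsummable).symm.trans
      (tsum_symmetricIco_linear_sub_linear_add_one_eq_zero τ m)
  have hterm (n : ℤ) : wzetaSummand 1 (latticePoint τ ![m, n]) =
      eisSummand 2 ![m, n] τ - (1 / ((m : ℂ) * τ + n) - 1 / ((m : ℂ) * τ + n + 1)) := by
    simp only [wzetaSummand, latticePoint, eisSummand, Matrix.cons_val_zero, Matrix.cons_val_one,
      inv_neg, neg_sq, sub_neg_eq_add, one_div, zpow_neg, zpow_ofNat]
    ring
  simp_rw [hterm]
  rw [(e2Summand_summable m τ).tsum_sub hsummable, htelescope, sub_zero, e2Summand]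

theorem wzeta_one_eq_G2 (τ : ℍ) : wzeta (latticeSet 1 τ) 1 = G2 τ := by
  have hs : Summable fun p : ℤ × ℤ ↦ wzetaSummand 1 (latticePoint τ ![p.1, p.2]) :=
    (finTwoArrowEquiv ℤ).symm.summable_iff.2 (summable_wzetaSummand_latticePoint τ 1)
  have hrows : Summable fun m ↦ e2Summand m τ := by
    simpa only [tsum_wzetaSummand_one_row] using hs.prod
  rw [wzeta_eq_tsum_latticePoint, ← (finTwoArrowEquiv ℤ).symm.tsum_eq, G2,
    tsum_eq_of_summable_unconditional hrows]
  exact hs.tsum_prod.trans (tsum_congr (tsum_wzetaSummand_one_row τ))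

theorem legendre_relation (τ : ℍ) :
    τ * wzeta (latticeSet 1 τ) 1 - wzeta (latticeSet 1 τ) τ = 2 * π * I := by
  have hτ : (τ : ℂ) ≠ 0 := ne_zero τ
  have hS : ((S • τ : ℍ) : ℂ) = -(τ : ℂ)⁻¹ := by
    rw [modular_S_smul, coe_mk, inv_neg]
  have hΛ : (fun w ↦ (τ : ℂ) * w) '' latticeSet 1 (S • τ : ℍ) = latticeSet 1 τ := by
    rw [image_mul_latticeSet, hS, mul_one, mul_neg, mul_inv_cancel₀ hτ, latticeSet_neg_right_swap]
  have hwτ : wzeta (latticeSet 1 τ) τ = (τ : ℂ)⁻¹ * G2 (S • τ) := by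
    simpa only [hΛ, mul_one, wzeta_one_eq_G2] using wzeta_image_mul (latticeSet 1 (S • τ : ℍ)) hτ 1
  rw [hwτ, wzeta_one_eq_G2, G2_S_transform τ]
  field_simp
  ring

theorem meromorphicOn_wzeta_one :
    MeromorphicOn (fun τ ↦ wzeta (latticeSet 1 τ) 1) {τ : ℂ | 0 < τ.im} := by
  have hE2 : DifferentiableOn ℂ (E2 ∘ ofComplex) {τ : ℂ | 0 < τ.im} :=
    mdifferentiable_iff.1 E2_mdifferentiable
  have hanalytic : AnalyticOnNhd ℂ (fun τ ↦ 2 * riemannZeta 2 * (E2 ∘ ofComplex) τ)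
      {τ : ℂ | 0 < τ.im} := (hE2.const_mul _).analyticOnNhd isOpen_upperHalfPlaneSet
  refine hanalytic.meromorphicOn.congr (fun τ hτ ↦ ?_) isOpen_upperHalfPlaneSet
  have hζ : riemannZeta 2 ≠ 0 := riemannZeta_ne_zero_of_one_le_re (by norm_num)
  have hG2 : wzeta (latticeSet 1 τ) 1 = G2 ⟨τ, hτ⟩ := wzeta_one_eq_G2 ⟨τ, hτ⟩
  simp only [hG2, Function.comp_apply, ofComplex_apply_of_im_pos hτ, E2, Pi.smul_apply,
    smul_eq_mul]
  field_simp

theorem meromorphicOn_wzeta_self :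
    MeromorphicOn (fun τ ↦ wzeta (latticeSet 1 τ) τ) {τ : ℂ | 0 < τ.im} := by
  have hmer : MeromorphicOn (fun τ : ℂ ↦ τ * wzeta (latticeSet 1 τ) 1 - 2 * π * I)
      {τ : ℂ | 0 < τ.im} :=
    (MeromorphicOn.id.fun_mul meromorphicOn_wzeta_one).fun_sub (.const _)
  refine hmer.congr (fun τ hτ ↦ ?_) isOpen_upperHalfPlaneSet
  linear_combination legendre_relation ⟨τ, hτ⟩

end Legendre

section EllipticZeta

/-- The elliptic zeta function `𝒵(Λ, z) = c(Λ) z + ζ(Λ, z)` of weight `-1`, for a function of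
lattices `c` homogeneous of degree `-2`. Its value at `0` is `0`, so its quasi-period map is
its own restriction to `Λ`. -/
def EllipticZeta.ofLinearTerm (c : Set ℂ → ℂ)
    (hc_homog : ∀ Λ, IsLattice Λ → ∀ α : ℂ, α ≠ 0 →
      c ((fun w ↦ α * w) '' Λ) = (α ^ 2)⁻¹ * c Λ)
    (hc_mer : MeromorphicOn (fun τ ↦ c (latticeSet 1 τ)) {τ : ℂ | 0 < τ.im})
    {η : ℂ → ℂ → ℂ} (hη : ∀ τ : ℂ, 0 < τ.im → IsQuasiPeriod (latticeSet 1 τ) (η τ)) :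
    EllipticZeta (-1) where
  Z Λ z := c Λ * z + wzeta Λ z
  H Λ ω := c Λ * ω + wzeta Λ ω
  quasi Λ hΛ ω hω z := by
    rw [wzeta_add_of_mem hη hΛ hω]
    ring
  homog Λ hΛ α hα z := by
    rw [hc_homog Λ hΛ α hα, wzeta_image_mul Λ hα, zpow_neg_one]
    field_simp
  merom_tau := (hc_mer.fun_mul .id).fun_add meromorphicOn_wzeta_self
  merom_one := (hc_mer.fun_mul (.const 1)).fun_add meromorphicOn_wzeta_one

theorem div_eq_of_legendre {ω₁ ω₂ η₁ η₂ c Φ Ψ : ℂ}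
    (hlegendre : ω₂ * η₁ - ω₁ * η₂ = 2 * Real.pi * I)
    (hΦ : 2 * Real.pi * I * Φ = η₂ * (c * ω₁ + η₁) - η₁ * (c * ω₂ + η₂))
    (hΨ : 2 * Real.pi * I * Ψ = ω₁ * (c * ω₂ + η₂) - ω₂ * (c * ω₁ + η₁)) : Φ / Ψ = c := by
  have hΦc : Φ = -c := mul_left_cancel₀ two_pi_I_ne_zero (by linear_combination hΦ - c * hlegendre)
  have hΨ1 : Ψ = -1 := mul_left_cancel₀ two_pi_I_ne_zero (by linear_combination hΨ - hlegendre)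
  rw [hΦc, hΨ1, neg_div_neg_eq, div_one]

end EllipticZeta

/-- for a weight 2 meromorphic modular form `f` for `SL₂(ℤ)`, the quantity
`(1/ω₁²) f(ω₂/ω₁)` is independent of the choice of oriented basis of the lattice, and
`𝒵(Λ, z) = (1/ω₁²) f(ω₂/ω₁) z + ζ(Λ, z)` is an elliptic zeta function of weight `-1`
whose associated quotient `Φ_{Λ_τ}/Ψ_{Λ_τ}` equals `f(τ)`; hence `𝒵 ↦ Φ/Ψ` is
surjective onto weight 2 meromorphic modular forms. -/
theorem modularForm_to_ellipticZeta (f : ℂ → ℂ)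
    (hf_mer : MeromorphicOn f {τ : ℂ | 0 < τ.im})
    (hf_mod : ∀ a b c d : ℤ, a * d - b * c = 1 → ∀ τ : ℂ, 0 < τ.im →
      f (((a : ℂ) * τ + b) / ((c : ℂ) * τ + d)) = ((c : ℂ) * τ + d) ^ 2 * f τ)
    (η : ℂ → ℂ → ℂ) (hη : ∀ τ : ℂ, 0 < τ.im → IsQuasiPeriod (latticeSet 1 τ) (η τ)) :
    (∀ ω₁ ω₂ ω₁' ω₂' : ℂ, 0 < (ω₂ / ω₁).im → 0 < (ω₂' / ω₁').im →
       latticeSet ω₁ ω₂ = latticeSet ω₁' ω₂' →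
       1 / ω₁ ^ 2 * f (ω₂ / ω₁) = 1 / ω₁' ^ 2 * f (ω₂' / ω₁')) ∧
    ∃ Z : EllipticZeta (-1),
      (∀ ω₁ ω₂ : ℂ, 0 < (ω₂ / ω₁).im → ∀ z : ℂ,
        Z.Z (latticeSet ω₁ ω₂) z = 1 / ω₁ ^ 2 * f (ω₂ / ω₁) * z + wzeta (latticeSet ω₁ ω₂) z) ∧
      ∀ τ : ℂ, 0 < τ.im → ∀ Φ Ψ : ℂ,
        2 * (Real.pi : ℂ) * Complex.I * Φ
          = η τ τ * Z.H (latticeSet 1 τ) 1 - η τ 1 * Z.H (latticeSet 1 τ) τ →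
        2 * (Real.pi : ℂ) * Complex.I * Ψ
          = Z.H (latticeSet 1 τ) τ - τ * Z.H (latticeSet 1 τ) 1 →
        Φ / Ψ = f τ := by
  refine ⟨fun _ _ _ _ h h' hΛ ↦ div_pow_mul_eq_of_latticeSet_eq hf_mod h h' hΛ,
    .ofLinearTerm (latticeFun 2 f) (fun _ hΛ _ hα ↦ latticeFun_image_mul hf_mod hΛ hα)
      (meromorphicOn_latticeFun hf_mod hf_mer) hη, fun ω₁ ω₂ h z ↦ ?_, fun τ hτ Φ Ψ hΦ hΨ ↦ ?_⟩
  · rw [← latticeFun_latticeSet hf_mod h]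
    rfl
  · rw [(hη τ hτ).eq_wzeta (right_mem_latticeSet 1 τ),
      (hη τ hτ).eq_wzeta (left_mem_latticeSet 1 τ)] at hΦ
    rw [← latticeFun_one_left hf_mod hτ]
    exact div_eq_of_legendre (ω₁ := 1) (by rw [one_mul]; exact legendre_relation ⟨τ, hτ⟩) hΦ
      (by rw [one_mul]; exact hΨ)
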